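/- The partition-of-unity blend of local plane models with the exponential blender ψ is globally infinitely smooth: for arbitrary coefficient families a', b', c' : ℤ × ℤ → ℝ, the function g : ℝ × ℝ → ℝ defined by g(x, y) = ∑_{(α,β) ∈ ℤ×ℤ} (a'(α,β)·x + b'(α,β)·y + c'(α,β)) · ψ(x − α·a) · ψ(y − β·a) (a locally finite sum, since ψ is compactly supported) satisfies ContDiff ℝ ⊤ g. -/

import Mathlib

open Real

/-- The compactly supported exponential blender with smoothing parameter `s`
and support half-width `a`. -/
noncomputable def expBlender (s a : ℝ) (x : ℝ) : ℝ :=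
  if x = 0 then 1
  else if a ≤ |x| then 0
  else 1 / (Real.exp (s * (1 / (1 - |x| / a) - 1 / (|x| / a))) + 1)

/-!
The blender is `φ (|x| / a)`, where `φ` is a quotient of rescaled copies of the flat function
`t ↦ exp (-1 / t)`, hence smooth and constant on `(-∞, 0]`. This constancy removes the corner of
the absolute value, because `φ |u| = φ u + φ (-u) - φ 0`. In the sup metric the weight of the
cell `(α, β)` lives on the ball of radius `a` around the grid point `(α a, β a)`, and balls of
fixed radius around points that leave every compact set form a locally finite family.
-/

open Set Filter Function Metric

section General

variable {ι 𝕜 E F X : Type*}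

theorem contDiff_tsum_of_locallyFinite [NontriviallyNormedField 𝕜]
    [NormedAddCommGroup E] [NormedSpace 𝕜 E] [NormedAddCommGroup F] [NormedSpace 𝕜 F]
    {n : WithTop ℕ∞} {f : ι → E → F} (hf : ∀ i, ContDiff 𝕜 n (f i))
    (hfin : LocallyFinite fun i ↦ support (f i)) :
    ContDiff 𝕜 n fun x ↦ ∑' i, f i x := by
  have tsum_eq : (fun x ↦ ∑' i, f i x) = fun x ↦ ∑ᶠ i, f i x :=
    funext fun x ↦ tsum_eq_finsum (hfin.point_finite x)
  rw [tsum_eq]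
  exact (contMDiff_finsum (fun i ↦ (hf i).contMDiff) hfin).contDiff

theorem contDiff_comp_abs [NormedAddCommGroup F] [NormedSpace ℝ F] {n : WithTop ℕ∞} {f : ℝ → F}
    (hf : ContDiff ℝ n f) (hconst : ∀ t ≤ 0, f t = f 0) : ContDiff ℝ n fun x ↦ f |x| := by
  have comp_abs_eq (x : ℝ) : f |x| = f x + f (-x) - f 0 := by
    rcases le_total 0 x with hx | hx
    · rw [abs_of_nonneg hx, hconst (-x) (neg_nonpos.2 hx), add_sub_cancel_right]
    · rw [abs_of_nonpos hx, hconst x hx, add_sub_cancel_left]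
  simp only [comp_abs_eq]
  fun_prop

theorem locallyFinite_ball_of_tendsto_cocompact [PseudoMetricSpace X] [ProperSpace X] {c : ι → X}
    (hc : Tendsto c cofinite (cocompact X)) (r : ℝ) : LocallyFinite fun i ↦ ball (c i) r := by
  intro x
  have centers_finite : (c ⁻¹' closedBall x (r + 1)).Finite :=
    tendsto_cofinite_cocompact_iff.1 hc _ (isCompact_closedBall x (r + 1))
  refine ⟨ball x 1, ball_mem_nhds x one_pos, centers_finite.subset ?_⟩
  rintro i ⟨y, hyc, hyx⟩
  calc dist (c i) x ≤ dist y (c i) + dist y x := dist_triangle_left _ _ _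
    _ ≤ r + 1 := (add_lt_add hyc hyx).le

theorem tendsto_int_mul_cofinite_cocompact {a : ℝ} (ha : a ≠ 0) :
    Tendsto (fun n : ℤ ↦ n * a) cofinite (cocompact ℝ) :=
  (Int.tendsto_zmultiplesHom_cofinite ha).congr fun n ↦ by rw [zmultiplesHom_apply, zsmul_eq_mul]

theorem tendsto_int_mul_prod_cofinite_cocompact {a : ℝ} (ha : a ≠ 0) :
    Tendsto (fun p : ℤ × ℤ ↦ (p.1 * a, p.2 * a)) cofinite (cocompact (ℝ × ℝ)) := by
  rw [← coprod_cofinite, ← coprod_cocompact]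
  exact (tendsto_int_mul_cofinite_cocompact ha).prodMap_coprod
    (tendsto_int_mul_cofinite_cocompact ha)

end General

/-- The profile of the exponential blender: for `0 < s`, a smooth step descending from `1` on
`(-∞, 0]` to `0` on `[1, ∞)`. Dividing the arguments of `expNegInvGlue` by `s` turns `exp (-1 / t)`
into `exp (-s / t)`, which avoids a case distinction at the endpoints. -/
noncomputable def expStep (s t : ℝ) : ℝ :=
  expNegInvGlue ((1 - t) / s) / (expNegInvGlue ((1 - t) / s) + expNegInvGlue (t / s))

section ExpStep

variable {s t : ℝ}

theorem expStep_denom_pos (hs : 0 < s) (t : ℝ) :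
    0 < expNegInvGlue ((1 - t) / s) + expNegInvGlue (t / s) := by
  rcases lt_or_ge 0 t with ht | ht
  · exact add_pos_of_nonneg_of_pos (expNegInvGlue.nonneg _)
      (expNegInvGlue.pos_of_pos (div_pos ht hs))
  · exact add_pos_of_pos_of_nonneg
      (expNegInvGlue.pos_of_pos (div_pos (by linarith) hs)) (expNegInvGlue.nonneg _)

theorem contDiff_expStep (hs : 0 < s) {n : ℕ∞} : ContDiff ℝ n (expStep s) := by
  have denom_ne (t : ℝ) := (expStep_denom_pos hs t).ne'
  unfold expStep
  fun_prop (disch := assumption)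

theorem expStep_of_nonpos (hs : 0 < s) (ht : t ≤ 0) : expStep s t = 1 := by
  have glue_eq_zero : expNegInvGlue (t / s) = 0 :=
    expNegInvGlue.zero_of_nonpos (div_nonpos_of_nonpos_of_nonneg ht hs.le)
  have denom_ne := (expStep_denom_pos hs t).ne'
  rw [glue_eq_zero, add_zero] at denom_ne
  rw [expStep, glue_eq_zero, add_zero, div_self denom_ne]

theorem expStep_of_one_le (hs : 0 < s) (ht : 1 ≤ t) : expStep s t = 0 := by
  rw [expStep, expNegInvGlue.zero_of_nonpos
    (div_nonpos_of_nonpos_of_nonneg (sub_nonpos.2 ht) hs.le), zero_div]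

theorem expStep_of_mem_Ioo (hs : 0 < s) (ht : t ∈ Ioo 0 1) :
    expStep s t = 1 / (exp (s * (1 / (1 - t) - 1 / t)) + 1) := by
  have exp_eq : exp (s * (1 / (1 - t) - 1 / t)) =
      exp (-(t / s)⁻¹) / exp (-((1 - t) / s)⁻¹) := by
    rw [← exp_sub, inv_div, inv_div]
    ring_nf
  rw [exp_eq, expStep, expNegInvGlue, expNegInvGlue,
    if_neg (div_pos ht.1 hs).not_ge, if_neg (div_pos (sub_pos.2 ht.2) hs).not_ge,
    div_add_one (exp_ne_zero _), one_div_div, add_comm]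

end ExpStep

section ExpBlender

variable {s a : ℝ}

theorem expBlender_eq_expStep (hs : 0 < s) (ha : 0 < a) (x : ℝ) :
    expBlender s a x = expStep s (|x| / a) := by
  unfold expBlender
  split_ifs with hx hax
  · rw [expStep_of_nonpos hs (by simp [hx])]
  · rw [expStep_of_one_le hs ((one_le_div ha).2 hax)]
  · rw [expStep_of_mem_Ioo hs ⟨div_pos (abs_pos.2 hx) ha, (div_lt_one ha).2 (not_le.1 hax)⟩]

theorem contDiff_expBlender (hs : 0 < s) (ha : 0 < a) {n : ℕ∞} :
    ContDiff ℝ n (expBlender s a) := by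
  have eq_comp_abs : expBlender s a = fun x ↦ expStep s |x / a| := by
    ext x
    rw [expBlender_eq_expStep hs ha, abs_div, abs_of_pos ha]
  have comp_abs : ContDiff ℝ n fun t ↦ expStep s |t| :=
    contDiff_comp_abs (contDiff_expStep hs) fun t ht ↦ by
      rw [expStep_of_nonpos hs ht, expStep_of_nonpos hs le_rfl]
  rw [eq_comp_abs]
  exact comp_abs.comp (contDiff_id.div_const a)

theorem support_expBlender_subset (ha : 0 < a) : support (expBlender s a) ⊆ ball 0 a := by
  intro x hx
  rw [mem_ball_zero_iff, norm_eq_abs]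
  by_contra! hax
  exact hx (by rw [expBlender, if_neg (abs_pos.1 (ha.trans_le hax)), if_pos hax])

theorem locallyFinite_support_expBlender_mul (ha : 0 < a) :
    LocallyFinite fun p : ℤ × ℤ ↦ support fun q : ℝ × ℝ ↦
      expBlender s a (q.1 - p.1 * a) * expBlender s a (q.2 - p.2 * a) := by
  have balls_locallyFinite :=
    locallyFinite_ball_of_tendsto_cocompact (tendsto_int_mul_prod_cofinite_cocompact ha.ne') a
  refine balls_locallyFinite.subset fun p q hq ↦ ?_
  have hq₁ := support_expBlender_subset ha (left_ne_zero_of_mul hq)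
  have hq₂ := support_expBlender_subset ha (right_ne_zero_of_mul hq)
  rw [mem_ball_zero_iff] at hq₁ hq₂
  rw [← ball_prod_same]
  exact ⟨mem_ball_iff_norm.2 hq₁, mem_ball_iff_norm.2 hq₂⟩

theorem expBlender_blend_of_planes_smooth_general {F : Type*} [NormedAddCommGroup F]
    [NormedSpace ℝ F] (hs : 0 < s) (ha : 0 < a) {n : ℕ∞} {f : ℤ × ℤ → ℝ × ℝ → F}
    (hf : ∀ p, ContDiff ℝ n (f p)) :
    ContDiff ℝ n fun q : ℝ × ℝ ↦ ∑' p : ℤ × ℤ,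
      (expBlender s a (q.1 - p.1 * a) * expBlender s a (q.2 - p.2 * a)) • f p q := by
  have blender_contDiff : ContDiff ℝ n (expBlender s a) := contDiff_expBlender hs ha
  exact contDiff_tsum_of_locallyFinite (fun p ↦ by fun_prop)
    ((locallyFinite_support_expBlender_mul ha).subset fun p ↦ support_smul_subset_left _ _)

end ExpBlender

theorem expBlender_blend_of_planes_smooth (s a : ℝ) (hs : 0 < s) (ha : 0 < a)
    (a' b' c' : ℤ × ℤ → ℝ) :
    ContDiff ℝ (⊤ : ℕ∞) (fun q : ℝ × ℝ =>
      ∑' p : ℤ × ℤ, (a' p * q.1 + b' p * q.2 + c' p) *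
        expBlender s a (q.1 - p.1 * a) * expBlender s a (q.2 - p.2 * a)) := by
  simpa only [smul_eq_mul, mul_comm, mul_left_comm, mul_assoc] using
    expBlender_blend_of_planes_smooth_general hs ha
      (f := fun p q ↦ a' p * q.1 + b' p * q.2 + c' p) (fun p ↦ by fun_prop)
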